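/- arXiv:1402.1703 — 6 statements merged into one kernel-verified Lean document; each statement's English description precedes it below -/
import Mathlib

section
/- Let q ≥ 1 be an integer and b : ℕ × ℕ → ℂ be given. For any prescribed values μ(i,j) ∈ ℂ for i ∈ {0,1} and 0 ≤ j ≤ q+1−i, there exists a unique family λ(i,j) ∈ ℂ, indexed by (i,j) ∈ ℕ² with 0 ≤ i+j ≤ q+1, that satisfies the GPW system and the constraints λ(i,j) = μ(i,j) for all i ∈ {0,1} and 0 ≤ j ≤ q+1−i. Moreover this unique solution is given by the explicit induction formula: for all (i,j) with i+j ≤ q−1, λ(i+2,j) = (1/((i+2)(i+1))) · ( b(i,j) − (j+2)(j+1)λ(i,j+2) − Σ_{k=0}^{i} Σ_{l=0}^{j} (i−k+1)(k+1) λ(i−k+1, j−l) λ(k+1, l) − Σ_{k=0}^{j} Σ_{l=0}^{i} (j−k+1)(k+1) λ(i−l, j−k+1) λ(l, k+1) ). -/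
noncomputable section

/-- The GPW system: the nonlinear system on the coefficients `lam` arising from matching the
Taylor expansion of `β - P_Δ` at `G` up to order `q`, where `b (i,j) = ∂ₓ^i ∂_y^j β(G)/(i!j!)`. -/
def gpwSystem (q : ℕ) (b lam : ℕ × ℕ → ℂ) : Prop :=
  ∀ i j : ℕ, i + j + 1 ≤ q →
    b (i, j) =
      (((i + 2) * (i + 1) : ℕ) : ℂ) * lam (i + 2, j)
        + (((j + 2) * (j + 1) : ℕ) : ℂ) * lam (i, j + 2)
        + ∑ k ∈ Finset.range (i + 1), ∑ l ∈ Finset.range (j + 1),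
            (((i - k + 1) * (k + 1) : ℕ) : ℂ) * lam (i - k + 1, j - l) * lam (k + 1, l)
        + ∑ k ∈ Finset.range (j + 1), ∑ l ∈ Finset.range (i + 1),
            (((j - k + 1) * (k + 1) : ℕ) : ℂ) * lam (i - l, j - k + 1) * lam (l, k + 1)

/-- Right-hand side of the explicit induction formula. -/
def gpwRhs (b lam : ℕ × ℕ → ℂ) (i j : ℕ) : ℂ :=
  (1 / (((i + 2) * (i + 1) : ℕ) : ℂ)) *
    (b (i, j) - (((j + 2) * (j + 1) : ℕ) : ℂ) * lam (i, j + 2)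
      - ∑ k ∈ Finset.range (i + 1), ∑ l ∈ Finset.range (j + 1),
          (((i - k + 1) * (k + 1) : ℕ) : ℂ) * lam (i - k + 1, j - l) * lam (k + 1, l)
      - ∑ k ∈ Finset.range (j + 1), ∑ l ∈ Finset.range (i + 1),
          (((j - k + 1) * (k + 1) : ℕ) : ℂ) * lam (i - l, j - k + 1) * lam (l, k + 1))

theorem gpwRhs_congr (b f g : ℕ × ℕ → ℂ) (i j : ℕ)
    (h : ∀ a c : ℕ, a ≤ i + 1 → a + c ≤ i + j + 2 → f (a, c) = g (a, c)) :
    gpwRhs b f i j = gpwRhs b g i j := by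
  unfold gpwRhs
  rw [h i (j + 2) (by omega) (by omega)]
  congr 2
  · congr 1
    refine Finset.sum_congr rfl fun k hk => Finset.sum_congr rfl fun l hl => ?_
    rw [Finset.mem_range] at hk hl
    rw [h (i - k + 1) (j - l) (by omega) (by omega), h (k + 1) l (by omega) (by omega)]
  · refine Finset.sum_congr rfl fun k hk => Finset.sum_congr rfl fun l hl => ?_
    rw [Finset.mem_range] at hk hl
    rw [h (i - l) (j - k + 1) (by omega) (by omega), h l (k + 1) (by omega) (by omega)]

theorem gpwSystem_iff (q : ℕ) (b lam : ℕ × ℕ → ℂ) :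
    gpwSystem q b lam ↔ ∀ i j : ℕ, i + j + 1 ≤ q → lam (i + 2, j) = gpwRhs b lam i j := by
  unfold gpwSystem gpwRhs
  refine forall_congr' fun i => forall_congr' fun j => imp_congr_right fun _ => ?_
  have h0 : (((i + 2) * (i + 1) : ℕ) : ℂ) ≠ 0 := Nat.cast_ne_zero.mpr (by positivity)
  rw [one_div, eq_inv_mul_iff_mul_eq₀ h0]
  constructor
  · intro h
    rw [h]; ring
  · intro h
    rw [h]; ring

/-- Row by row construction of the solution. -/
def gpwRows (b μ : ℕ × ℕ → ℂ) : ℕ → ℕ × ℕ → ℂ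
  | 0 => μ
  | n + 1 => fun p => if p.1 = n + 2 then gpwRhs b (gpwRows b μ n) n p.2 else gpwRows b μ n p

theorem gpwRows_stable (b μ : ℕ × ℕ → ℂ) (n d : ℕ) (p : ℕ × ℕ) (hp : p.1 ≤ n + 1) :
    gpwRows b μ (n + d) p = gpwRows b μ n p := by
  induction d with
  | zero => rfl
  | succ d ih =>
    rw [← ih, ← add_assoc, gpwRows]
    exact if_neg (by omega)

theorem gpwRows_diag (b μ : ℕ × ℕ → ℂ) (n : ℕ) (a c : ℕ) (hp : a ≤ n + 1) :
    gpwRows b μ n (a, c) = gpwRows b μ a (a, c) := by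
  rcases Nat.lt_or_ge n a with h | h
  · obtain rfl : a = n + 1 := by omega
    exact (gpwRows_stable b μ n 1 _ le_rfl).symm
  · obtain ⟨d, rfl⟩ := Nat.exists_eq_add_of_le h
    exact gpwRows_stable b μ a d _ (Nat.le_succ a)

theorem gpwRows_rec (b μ : ℕ × ℕ → ℂ) (i j : ℕ) :
    gpwRows b μ (i + 2) (i + 2, j) = gpwRhs b (fun p => gpwRows b μ p.1 p) i j := by
  rw [← gpwRows_diag b μ (i + 1) (i + 2) j le_rfl, gpwRows]
  refine (if_pos rfl).trans ?_
  exact gpwRhs_congr _ _ _ _ _ fun a c ha _ => gpwRows_diag b μ i a c ha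

/-- For any prescribed values `μ (i,j)`, `i ∈ {0,1}`, `0 ≤ j ≤ q+1-i`, there is a unique family
`lam (i,j)`, `0 ≤ i + j ≤ q+1`, satisfying the GPW system together with the constraints
`lam (i,j) = μ (i,j)` for `i ∈ {0,1}`, `0 ≤ j ≤ q+1-i`; it is given by the explicit
induction formula. -/
theorem gpw_system_exists_unique (q : ℕ) (hq : 1 ≤ q) (b μ : ℕ × ℕ → ℂ) :
    ∃ lam : ℕ × ℕ → ℂ,
      (gpwSystem q b lam ∧
        (∀ i j : ℕ, i ≤ 1 → i + j ≤ q + 1 → lam (i, j) = μ (i, j)) ∧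
        (∀ i j : ℕ, i + j + 1 ≤ q →
          lam (i + 2, j) =
            (1 / (((i + 2) * (i + 1) : ℕ) : ℂ)) *
              (b (i, j) - (((j + 2) * (j + 1) : ℕ) : ℂ) * lam (i, j + 2)
                - ∑ k ∈ Finset.range (i + 1), ∑ l ∈ Finset.range (j + 1),
                    (((i - k + 1) * (k + 1) : ℕ) : ℂ) * lam (i - k + 1, j - l) * lam (k + 1, l)
                - ∑ k ∈ Finset.range (j + 1), ∑ l ∈ Finset.range (i + 1),
                    (((j - k + 1) * (k + 1) : ℕ) : ℂ) * lam (i - l, j - k + 1) * lam (l, k + 1)))) ∧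
      ∀ lam' : ℕ × ℕ → ℂ,
        gpwSystem q b lam' →
        (∀ i j : ℕ, i ≤ 1 → i + j ≤ q + 1 → lam' (i, j) = μ (i, j)) →
        ∀ i j : ℕ, i + j ≤ q + 1 → lam' (i, j) = lam (i, j) := by
  refine ⟨fun p => gpwRows b μ p.1 p, ⟨(gpwSystem_iff _ _ _).2 fun i j _ => gpwRows_rec b μ i j,
    fun i j hi _ => (gpwRows_diag b μ 0 i j (by omega)).symm,
    fun i j _ => gpwRows_rec b μ i j⟩, ?_⟩
  intro lam' hs hc i
  rw [gpwSystem_iff] at hs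
  induction i using Nat.strong_induction_on with
  | _ i ih =>
    intro j hij
    rcases Nat.lt_or_ge i 2 with h | h
    · rw [hc i j (by omega) hij]
      exact gpwRows_diag b μ 0 i j (by omega)
    · obtain ⟨m, rfl⟩ := Nat.exists_eq_add_of_le' h
      rw [hs m j (by omega)]
      refine Eq.trans ?_ (gpwRows_rec b μ m j).symm
      exact gpwRhs_congr _ _ _ _ _ fun a c ha hac => ih a (by omega) c (by omega)
end
end

section
/- Let q ≥ 1, b : ℕ × ℕ → ℂ, and N ∈ ℂ with N ≠ 0. There exists a family of bivariate polynomials R(i,j) ∈ ℂ[X,Y], indexed by (i,j) with i ≥ 2 and i + j ≤ q + 1, whose coefficients depend only on N, q and b (in particular not on θ), such that the total degree of R(i,j) is at most i − 2 and, for every θ ∈ ℝ, the unique solution λ of the GPW system under the GPW normalization with direction θ satisfies λ(i,j) = R(i,j)(N cos θ, N sin θ) for all such (i,j). -/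
noncomputable section

/-- The GPW normalization: `lam (0,0) = 0`, `(lam (1,0), lam (0,1)) = N (cos θ, sin θ)`, and
`lam (i,j) = 0` for `i ∈ {0,1}` and `1 < i + j ≤ q + 1`. -/
def gpwNormalized (q : ℕ) (N : ℂ) (θ : ℝ) (lam : ℕ × ℕ → ℂ) : Prop :=
  lam (0, 0) = 0 ∧ lam (1, 0) = N * Real.cos θ ∧ lam (0, 1) = N * Real.sin θ ∧
    ∀ i j : ℕ, i ≤ 1 → 1 < i + j → i + j ≤ q + 1 → lam (i, j) = 0

/-- `f` is represented, on all normalized solutions, by a polynomial of total degree `≤ d`. -/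
def GpwRep (q : ℕ) (b : ℕ × ℕ → ℂ) (N : ℂ) (d : ℕ) (f : ℝ → (ℕ × ℕ → ℂ) → ℂ) : Prop :=
  ∃ R : MvPolynomial (Fin 2) ℂ, R.totalDegree ≤ d ∧
    ∀ (θ : ℝ) (lam : ℕ × ℕ → ℂ), gpwSystem q b lam → gpwNormalized q N θ lam →
      f θ lam = MvPolynomial.eval ![N * Real.cos θ, N * Real.sin θ] R

section
variable {q : ℕ} {b : ℕ × ℕ → ℂ} {N : ℂ}

theorem GpwRep.mono {d e : ℕ} {f} (h : GpwRep q b N d f) (hde : d ≤ e) : GpwRep q b N e f := by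
  obtain ⟨R, h1, h2⟩ := h
  exact ⟨R, h1.trans hde, h2⟩

theorem GpwRep.congr {d : ℕ} {f g : ℝ → (ℕ × ℕ → ℂ) → ℂ} (h : GpwRep q b N d f)
    (hfg : ∀ (θ : ℝ) (lam : ℕ × ℕ → ℂ), gpwSystem q b lam → gpwNormalized q N θ lam →
      g θ lam = f θ lam) : GpwRep q b N d g := by
  obtain ⟨R, h1, h2⟩ := h
  exact ⟨R, h1, fun θ lam hs hn => (hfg θ lam hs hn).trans (h2 θ lam hs hn)⟩

theorem GpwRep.const (d : ℕ) (c : ℂ) : GpwRep q b N d (fun _ _ => c) :=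
  ⟨MvPolynomial.C c, by simp, by simp⟩

theorem GpwRep.add {d : ℕ} {f g} (hf : GpwRep q b N d f) (hg : GpwRep q b N d g) :
    GpwRep q b N d (fun θ lam => f θ lam + g θ lam) := by
  obtain ⟨R, h1, h2⟩ := hf
  obtain ⟨S, h3, h4⟩ := hg
  refine ⟨R + S, (MvPolynomial.totalDegree_add _ _).trans (max_le h1 h3), ?_⟩
  intro θ lam hs hn
  rw [map_add, ← h2 θ lam hs hn, ← h4 θ lam hs hn]

theorem GpwRep.mul {d e : ℕ} {f g} (hf : GpwRep q b N d f) (hg : GpwRep q b N e g) :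
    GpwRep q b N (d + e) (fun θ lam => f θ lam * g θ lam) := by
  obtain ⟨R, h1, h2⟩ := hf
  obtain ⟨S, h3, h4⟩ := hg
  refine ⟨R * S, (MvPolynomial.totalDegree_mul _ _).trans (add_le_add h1 h3), ?_⟩
  intro θ lam hs hn
  rw [map_mul, ← h2 θ lam hs hn, ← h4 θ lam hs hn]

theorem GpwRep.smul {d : ℕ} {f} (c : ℂ) (hf : GpwRep q b N d f) :
    GpwRep q b N d (fun θ lam => c * f θ lam) :=
  ((GpwRep.const 0 c).mul hf).mono (by omega)

theorem GpwRep.sum {d : ℕ} {s : Finset ℕ} {f : ℕ → ℝ → (ℕ × ℕ → ℂ) → ℂ}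
    (hf : ∀ k ∈ s, GpwRep q b N d (f k)) :
    GpwRep q b N d (fun θ lam => ∑ k ∈ s, f k θ lam) := by
  induction s using Finset.induction_on with
  | empty => simpa using GpwRep.const d 0
  | insert a s ha ih =>
    simp only [Finset.sum_insert ha]
    exact (hf a (by simp)).add (ih fun k hk => hf k (by simp [hk]))

/-- Entries in the first two columns, apart from the two of order one, vanish. -/
theorem gpw_low {i j : ℕ} (hi : i ≤ 1) (hij : 1 < i + j) (h : i + j ≤ q + 1) :
    ∀ (θ : ℝ) (lam : ℕ × ℕ → ℂ), gpwSystem q b lam → gpwNormalized q N θ lam → lam (i, j) = 0 :=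
  fun _ _ _ hn => hn.2.2.2 i j hi hij h

theorem gpw_rep10 : GpwRep q b N 1 (fun _ lam => lam (1, 0)) :=
  ⟨MvPolynomial.X 0, by simp, fun θ lam _ hn => by simp [hn.2.1]⟩

theorem gpw_rep01 : GpwRep q b N 1 (fun _ lam => lam (0, 1)) :=
  ⟨MvPolynomial.X 1, by simp, fun θ lam _ hn => by simp [hn.2.2.1]⟩

theorem gpw_zero_left (d : ℕ) {p r : ℕ × ℕ}
    (h : ∀ (θ : ℝ) (lam : ℕ × ℕ → ℂ), gpwSystem q b lam → gpwNormalized q N θ lam → lam p = 0) :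
    GpwRep q b N d (fun _ lam => lam p * lam r) :=
  (GpwRep.const d 0).congr fun θ lam hs hn => by simp [h θ lam hs hn]

theorem gpw_zero_right (d : ℕ) {p r : ℕ × ℕ}
    (h : ∀ (θ : ℝ) (lam : ℕ × ℕ → ℂ), gpwSystem q b lam → gpwNormalized q N θ lam → lam r = 0) :
    GpwRep q b N d (fun _ lam => lam p * lam r) :=
  (GpwRep.const d 0).congr fun θ lam hs hn => by simp [h θ lam hs hn]

theorem gpw_term1 {i j a c m n : ℕ} (hac : a + c = i) (hmn : m + n = j) (hpos : 1 ≤ i + j)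
    (hq : i + j + 1 ≤ q)
    (ih : ∀ a m : ℕ, 2 ≤ a → a ≤ i + 1 → a + m ≤ q + 1 →
      GpwRep q b N (a - 2) (fun _ lam => lam (a, m))) :
    GpwRep q b N i (fun _ lam => lam (a + 1, m) * lam (c + 1, n)) := by
  by_cases h1 : a = 0 ∧ m ≠ 0
  · exact gpw_zero_left _ (gpw_low (by omega) (by omega) (by omega))
  by_cases h2 : c = 0 ∧ n ≠ 0
  · exact gpw_zero_right _ (gpw_low (by omega) (by omega) (by omega))
  rcases Nat.eq_zero_or_pos a with ha | ha
  · obtain rfl : m = 0 := by omega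
    subst ha
    exact (gpw_rep10.mul (ih (c + 1) n (by omega) (by omega) (by omega))).mono (by omega)
  rcases Nat.eq_zero_or_pos c with hc | hc
  · obtain rfl : n = 0 := by omega
    subst hc
    exact ((ih (a + 1) m (by omega) (by omega) (by omega)).mul gpw_rep10).mono (by omega)
  exact ((ih (a + 1) m (by omega) (by omega) (by omega)).mul
    (ih (c + 1) n (by omega) (by omega) (by omega))).mono (by omega)

theorem gpw_term2 {i j a c m n : ℕ} (hac : a + c = i) (hmn : m + n = j) (hpos : 1 ≤ i + j)
    (hq : i + j + 1 ≤ q)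
    (ih : ∀ a m : ℕ, 2 ≤ a → a ≤ i + 1 → a + m ≤ q + 1 →
      GpwRep q b N (a - 2) (fun _ lam => lam (a, m))) :
    GpwRep q b N i (fun _ lam => lam (a, m + 1) * lam (c, n + 1)) := by
  by_cases h1 : a ≤ 1 ∧ 1 ≤ a + m
  · exact gpw_zero_left _ (gpw_low (by omega) (by omega) (by omega))
  by_cases h2 : c ≤ 1 ∧ 1 ≤ c + n
  · exact gpw_zero_right _ (gpw_low (by omega) (by omega) (by omega))
  rcases Nat.eq_zero_or_pos a with ha | ha
  · obtain rfl : m = 0 := by omega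
    subst ha
    exact (gpw_rep01.mul (ih c (n + 1) (by omega) (by omega) (by omega))).mono (by omega)
  rcases Nat.eq_zero_or_pos c with hc | hc
  · obtain rfl : n = 0 := by omega
    subst hc
    exact ((ih a (m + 1) (by omega) (by omega) (by omega)).mul gpw_rep01).mono (by omega)
  exact ((ih a (m + 1) (by omega) (by omega) (by omega)).mul
    (ih c (n + 1) (by omega) (by omega) (by omega))).mono (by omega)

theorem gpw_step {i j : ℕ} (hq : i + j + 1 ≤ q)
    (ih : ∀ a m : ℕ, 2 ≤ a → a ≤ i + 1 → a + m ≤ q + 1 →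
      GpwRep q b N (a - 2) (fun _ lam => lam (a, m))) :
    GpwRep q b N i (fun _ lam => lam (i + 2, j)) := by
  have hne : (((i + 2) * (i + 1) : ℕ) : ℂ) ≠ 0 := by
    exact_mod_cast (by positivity : (i + 2) * (i + 1) ≠ 0)
  rcases Nat.eq_zero_or_pos (i + j) with h0 | hpos
  · obtain rfl : i = 0 := by omega
    obtain rfl : j = 0 := by omega
    refine (GpwRep.const 0 ((b (0, 0) - N ^ 2) / 2)).congr fun θ lam hs hn => ?_
    have h := hs 0 0 hq
    have h02 := hn.2.2.2 0 2 (by omega) (by omega) (by omega)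
    have hcs : (Real.cos θ : ℂ) ^ 2 + (Real.sin θ : ℂ) ^ 2 = 1 := by
      exact_mod_cast Real.cos_sq_add_sin_sq θ
    simp only [zero_add, Finset.sum_range_one, Nat.sub_zero, hn.2.1, hn.2.2.1, h02] at h
    push_cast at h hcs
    rw [h]
    push_cast
    linear_combination (-N ^ 2 / 2) * hcs
  · have hA : GpwRep q b N i (fun _ lam => lam (i, j + 2)) := by
      by_cases h : i ≤ 1
      · exact (GpwRep.const i 0).congr (gpw_low h (by omega) (by omega))
      · exact (ih i (j + 2) (by omega) (by omega) (by omega)).mono (by omega)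
    have hB : GpwRep q b N i (fun _ lam => ∑ k ∈ Finset.range (i + 1), ∑ l ∈ Finset.range (j + 1),
        (((i - k + 1) * (k + 1) : ℕ) : ℂ) * (lam (i - k + 1, j - l) * lam (k + 1, l))) := by
      refine GpwRep.sum fun k hk => GpwRep.sum fun l hl => GpwRep.smul _ ?_
      rw [Finset.mem_range] at hk hl
      exact gpw_term1 (by omega) (show j - l + l = j by omega) hpos hq ih
    have hC : GpwRep q b N i (fun _ lam => ∑ k ∈ Finset.range (j + 1), ∑ l ∈ Finset.range (i + 1),
        (((j - k + 1) * (k + 1) : ℕ) : ℂ) * (lam (i - l, j - k + 1) * lam (l, k + 1))) := by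
      refine GpwRep.sum fun k hk => GpwRep.sum fun l hl => GpwRep.smul _ ?_
      rw [Finset.mem_range] at hk hl
      exact gpw_term2 (by omega) (show j - k + k = j by omega) hpos hq ih
    refine (GpwRep.smul (1 / (((i + 2) * (i + 1) : ℕ) : ℂ)) ((GpwRep.const i (b (i, j))).add
      (GpwRep.smul (-1) (((GpwRep.smul (((j + 2) * (j + 1) : ℕ) : ℂ) hA).add hB).add
        hC)))).congr fun θ lam hs _ => ?_
    have h := hs i j hq
    simp only [mul_assoc] at h
    rw [one_div, eq_inv_mul_iff_mul_eq₀ hne, h]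
    ring

theorem gpw_all (i : ℕ) : ∀ j : ℕ, 2 ≤ i → i + j ≤ q + 1 →
    GpwRep q b N (i - 2) (fun _ lam => lam (i, j)) := by
  induction i using Nat.strong_induction_on with
  | _ i ih =>
    intro j hi hij
    obtain ⟨i, rfl⟩ := Nat.exists_eq_add_of_le' hi
    exact gpw_step (by omega) fun a m h1 h2 h3 => ih a (by omega) m h1 h3

end

/-- There is a family of bivariate polynomials `R (i,j)`, `2 ≤ i`, `i + j ≤ q + 1`, depending
only on `N`, `q` and `b` (not on `θ`), of total degree at most `i - 2`, such that for every
direction `θ` the solution of the GPW system under the GPW normalization satisfies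
`lam (i,j) = R (i,j) (N cos θ, N sin θ)`. -/
theorem gpw_coeffs_are_polynomials (q : ℕ) (hq : 1 ≤ q) (b : ℕ × ℕ → ℂ) (N : ℂ) (hN : N ≠ 0) :
    ∃ R : ℕ × ℕ → MvPolynomial (Fin 2) ℂ,
      (∀ i j : ℕ, 2 ≤ i → i + j ≤ q + 1 → (R (i, j)).totalDegree ≤ i - 2) ∧
      ∀ (θ : ℝ) (lam : ℕ × ℕ → ℂ),
        gpwSystem q b lam → gpwNormalized q N θ lam →
        ∀ i j : ℕ, 2 ≤ i → i + j ≤ q + 1 →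
          lam (i, j) =
            MvPolynomial.eval ![N * Real.cos θ, N * Real.sin θ] (R (i, j)) := by
  classical
  have key : ∀ p : ℕ × ℕ, ∃ R : MvPolynomial (Fin 2) ℂ, 2 ≤ p.1 → p.1 + p.2 ≤ q + 1 →
      R.totalDegree ≤ p.1 - 2 ∧
      ∀ (θ : ℝ) (lam : ℕ × ℕ → ℂ), gpwSystem q b lam → gpwNormalized q N θ lam →
        lam p = MvPolynomial.eval ![N * Real.cos θ, N * Real.sin θ] R := by
    rintro ⟨i, j⟩
    by_cases h : 2 ≤ i ∧ i + j ≤ q + 1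
    · obtain ⟨R, hR⟩ := gpw_all (b := b) (N := N) i j h.1 h.2
      exact ⟨R, fun _ _ => hR⟩
    · exact ⟨0, fun h1 h2 => absurd ⟨h1, h2⟩ h⟩
  choose R hR using key
  exact ⟨R, fun i j h1 h2 => (hR (i, j) h1 h2).1,
    fun θ lam hs hn i j h1 h2 => (hR (i, j) h1 h2).2 θ lam hs hn⟩
end
end

section
/- Let n ≥ 1 be an integer and κ ∈ ℂ with κ ≠ 0. For l ∈ {1, …, 2n+1} set θ_l = 2π(l−1)/(2n+1). Define the complex matrix M_n^C of size ((n+1)(n+2)/2) × (2n+1) whose rows are indexed by pairs (k₁,k₂) ∈ ℕ² with k₁ + k₂ ≤ n (the row of (k₁,k₂) being number (k₁+k₂)(k₁+k₂+1)/2 + k₂ + 1) and whose entries are (M_n^C)_{(k₁,k₂), l} = (Iκ)^{k₁+k₂} (cos θ_l)^{k₁} (sin θ_l)^{k₂} / (k₁! k₂!), where I = √(−1). Then the rank of M_n^C equals 2n+1. -/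
noncomputable section

/-- Row index type: pairs `(k₁, k₂)` of nonnegative integers with `k₁ + k₂ ≤ n`.
There are `(n+1)(n+2)/2` such pairs. -/
def RowIdx (n : ℕ) := { p : Fin (n + 1) × Fin (n + 1) // (p.1 : ℕ) + (p.2 : ℕ) ≤ n }

instance (n : ℕ) : Fintype (RowIdx n) := by unfold RowIdx; infer_instance

instance (n : ℕ) : DecidableEq (RowIdx n) := by unfold RowIdx; infer_instance

/-- The matrix `M_n^C` whose `l`-th column contains the normalized Taylor coefficients at `G`
of the plane wave `e_l(x,y) = exp(Iκ((x-x_G)cos θ_l + (y-y_G)sin θ_l))` with equi-spaced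
directions `θ_l = 2π(l-1)/(2n+1)`:
`(M_n^C)_{(k₁,k₂),l} = (Iκ)^{k₁+k₂} (cos θ_l)^{k₁} (sin θ_l)^{k₂} / (k₁! k₂!)`. -/
def MnC (n : ℕ) (κ : ℂ) : Matrix (RowIdx n) (Fin (2 * n + 1)) ℂ :=
  Matrix.of fun r l =>
    (Complex.I * κ) ^ ((r.1.1 : ℕ) + (r.1.2 : ℕ)) *
      ((Real.cos (2 * Real.pi * (l : ℕ) / (2 * n + 1)) : ℝ) : ℂ) ^ (r.1.1 : ℕ) *
      ((Real.sin (2 * Real.pi * (l : ℕ) / (2 * n + 1)) : ℝ) : ℂ) ^ (r.1.2 : ℕ) /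
      ((((r.1.1 : ℕ).factorial * (r.1.2 : ℕ).factorial : ℕ)) : ℂ)

theorem aux_sum_pow (n : ℕ) (c s v : Fin (2 * n + 1) → ℂ)
    (h : ∀ a b : ℕ, a + b ≤ n → ∑ l, c l ^ a * s l ^ b * v l = 0) (t : ℂ) (m : ℕ) (hm : m ≤ n) :
    ∑ l, (c l + t * s l) ^ m * v l = 0 := by
  simp_rw [add_pow, Finset.sum_mul]
  rw [Finset.sum_comm]
  refine Finset.sum_eq_zero fun a ha => ?_
  have ha' : a ≤ m := by simpa [Nat.lt_succ_iff] using ha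
  have := h a (m - a) (by omega)
  calc _ = ∑ l, (t ^ (m - a) * (m.choose a : ℂ)) * (c l ^ a * s l ^ (m - a) * v l) := by
        refine Finset.sum_congr rfl fun l _ => ?_
        rw [mul_pow]; ring
    _ = 0 := by rw [← Finset.mul_sum, this, mul_zero]

theorem aux_inj (n : ℕ) (c s v : Fin (2 * n + 1) → ℂ)
    (h : ∀ a b : ℕ, a + b ≤ n → ∑ l, c l ^ a * s l ^ b * v l = 0)
    (h1 : ∀ l, c l ^ 2 + s l ^ 2 = 1)
    (hinj : Function.Injective fun l => c l + Complex.I * s l) : v = 0 := by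
  have hzw : ∀ l, (c l + Complex.I * s l) * (c l + (-Complex.I) * s l) = 1 := by
    intro l
    linear_combination h1 l - s l ^ 2 * Complex.I_sq
  have key : (fun l => (c l + (-Complex.I) * s l) ^ n * v l) = 0 := by
    refine Matrix.eq_zero_of_forall_pow_sum_mul_pow_eq_zero hinj fun i => ?_
    rcases le_total n (i : ℕ) with hi | hi
    · obtain ⟨k, hk⟩ := Nat.exists_eq_add_of_le hi
      have := aux_sum_pow n c s v h Complex.I k (by omega)
      rw [← this]
      refine Finset.sum_congr rfl fun l _ => ?_
      have e : ((c l + Complex.I * s l) * (c l + (-Complex.I) * s l)) ^ n = 1 := by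
        rw [hzw, one_pow]
      rw [mul_pow] at e
      rw [hk, pow_add]
      linear_combination (c l + Complex.I * s l) ^ k * v l * e
    · obtain ⟨k, hk⟩ := Nat.exists_eq_add_of_le hi
      have := aux_sum_pow n c s v h (-Complex.I) k (by omega)
      rw [← this]
      refine Finset.sum_congr rfl fun l _ => ?_
      have e : ((c l + Complex.I * s l) * (c l + (-Complex.I) * s l)) ^ (i : ℕ) = 1 := by
        rw [hzw, one_pow]
      rw [mul_pow] at e
      have e2 : (c l + (-Complex.I) * s l) ^ n = (c l + (-Complex.I) * s l) ^ (i : ℕ) *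
          (c l + (-Complex.I) * s l) ^ k := by rw [← pow_add, ← hk]
      rw [e2]
      linear_combination (c l + (-Complex.I) * s l) ^ k * v l * e
  funext l
  have := congrFun key l
  have hne : c l + (-Complex.I) * s l ≠ 0 := fun h0 => by
    have := hzw l
    rw [h0, mul_zero] at this
    exact zero_ne_one this
  simpa [hne] using (mul_eq_zero.mp this).resolve_left (pow_ne_zero n hne)

/-- The matrix `M_n^C` of Taylor coefficients of the `2n+1` classical plane waves with
equi-spaced directions and nonzero wave number `κ` has full rank `2n+1`. -/
theorem rank_MnC (n : ℕ) (hn : 1 ≤ n) (κ : ℂ) (hκ : κ ≠ 0) :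
    (MnC n κ).rank = 2 * n + 1 := by
  have hker : Function.Injective (MnC n κ).mulVecLin := by
    rw [← LinearMap.ker_eq_bot, LinearMap.ker_eq_bot']
    intro v hv
    refine aux_inj n
      (fun l => ((Real.cos (2 * Real.pi * (l : ℕ) / (2 * n + 1)) : ℝ) : ℂ))
      (fun l => ((Real.sin (2 * Real.pi * (l : ℕ) / (2 * n + 1)) : ℝ) : ℂ)) v ?_ ?_ ?_
    · intro a b hab
      let r : RowIdx n := ⟨(⟨a, by omega⟩, ⟨b, by omega⟩), hab⟩
      have h : ∑ l, MnC n κ r l * v l = 0 := congrFun hv r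
      have hf : ((a.factorial * b.factorial : ℕ) : ℂ) ≠ 0 := by
        exact_mod_cast Nat.mul_ne_zero a.factorial_ne_zero b.factorial_ne_zero
      have hI : (Complex.I * κ) ^ (a + b) ≠ 0 := pow_ne_zero _ (mul_ne_zero Complex.I_ne_zero hκ)
      refine (mul_eq_zero.mp (?_ : ((Complex.I * κ) ^ (a + b) /
        ((a.factorial * b.factorial : ℕ) : ℂ)) * _ = 0)).resolve_left (div_ne_zero hI hf)
      rw [← h, Finset.mul_sum]
      refine Finset.sum_congr rfl fun l _ => ?_
      have e : MnC n κ r l = (Complex.I * κ) ^ (a + b) *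
          ((Real.cos (2 * Real.pi * (l : ℕ) / (2 * n + 1)) : ℝ) : ℂ) ^ a *
          ((Real.sin (2 * Real.pi * (l : ℕ) / (2 * n + 1)) : ℝ) : ℂ) ^ b /
          ((a.factorial * b.factorial : ℕ) : ℂ) := rfl
      rw [e]
      ring
    · intro l
      exact_mod_cast Real.cos_sq_add_sin_sq _
    · have hp := Complex.isPrimitiveRoot_exp (2 * n + 1) (by omega)
      have hz : ∀ l : Fin (2 * n + 1),
          ((Real.cos (2 * Real.pi * (l : ℕ) / (2 * n + 1)) : ℝ) : ℂ) +
          Complex.I * ((Real.sin (2 * Real.pi * (l : ℕ) / (2 * n + 1)) : ℝ) : ℂ) =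
          Complex.exp (2 * Real.pi * Complex.I / ((2 * n + 1 : ℕ) : ℂ)) ^ (l : ℕ) := by
        intro l
        rw [← Complex.exp_nat_mul, Complex.ofReal_cos, Complex.ofReal_sin, mul_comm Complex.I,
          ← Complex.exp_mul_I]
        congr 1
        push_cast
        ring
      intro l l' hl
      simp only [hz] at hl
      exact Fin.ext (hp.pow_inj l.2 l'.2 hl)
  rw [Matrix.rank, LinearMap.finrank_range_of_inj hker]
  simp
end
end

section
/- Let n ≥ 2 and b : ℕ × ℕ → ℂ. Define K as the set of families C = (C_{k₁,k₂}) ∈ ℂ^{(n+1)(n+2)/2}, indexed by (k₁,k₂) ∈ ℕ² with k₁ + k₂ ≤ n, satisfying for all (k₁,k₂) with k₁ + k₂ ≤ n − 2 the linear relation (k₁+1)(k₁+2) C_{k₁+2,k₂} + (k₂+1)(k₂+2) C_{k₁,k₂+2} = Σ_{i=0}^{k₁} Σ_{j=0}^{k₂} b(i,j) C_{k₁−i, k₂−j}. Then K is a ℂ-linear subspace of ℂ^{(n+1)(n+2)/2} of dimension exactly 2n + 1. -/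
noncomputable section

/-- The solution of the recursion with prescribed first two rows. -/
def solRec (n : ℕ) (b : ℕ × ℕ → ℂ) (p q : ℕ → ℂ) : ℕ → ℕ → ℂ
  | 0, k => p k
  | 1, k => q k
  | (m + 2), k =>
    if m + k + 2 ≤ n then
      ((∑ i ∈ Finset.range (m + 1), ∑ j ∈ Finset.range (k + 1),
        b (i, j) * solRec n b p q (m - i) (k - j))
        - (((k + 1) * (k + 2) : ℕ) : ℂ) * solRec n b p q m (k + 2)) / (((m + 1) * (m + 2) : ℕ) : ℂ)
    else 0
termination_by m _ => m
decreasing_by all_goals omega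

/-- The space of solutions. -/
def solSpace (n : ℕ) (b : ℕ × ℕ → ℂ) : Submodule ℂ ((ℕ × ℕ) → ℂ) where
  carrier := {C | (∀ k₁ k₂ : ℕ, n < k₁ + k₂ → C (k₁, k₂) = 0) ∧
            (∀ k₁ k₂ : ℕ, k₁ + k₂ + 2 ≤ n →
              (((k₁ + 1) * (k₁ + 2) : ℕ) : ℂ) * C (k₁ + 2, k₂)
                  + (((k₂ + 1) * (k₂ + 2) : ℕ) : ℂ) * C (k₁, k₂ + 2) =
                ∑ i ∈ Finset.range (k₁ + 1), ∑ j ∈ Finset.range (k₂ + 1),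
                  b (i, j) * C (k₁ - i, k₂ - j))}
  zero_mem' := by simp
  add_mem' := by
    rintro C D ⟨hC, hC'⟩ ⟨hD, hD'⟩
    refine ⟨fun k l h => by simp [hC k l h, hD k l h], fun k l h => ?_⟩
    simp only [Pi.add_apply, mul_add, Finset.sum_add_distrib]
    rw [← hC' k l h, ← hD' k l h]
    ring
  smul_mem' := by
    rintro c C ⟨hC, hC'⟩
    refine ⟨fun k l h => by simp [hC k l h], fun k l h => ?_⟩
    simp only [Pi.smul_apply, smul_eq_mul, mul_left_comm _ c, ← Finset.mul_sum]
    rw [← hC' k l h]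
    ring

/-- The positions of the free coefficients. -/
def freePos (n : ℕ) : Fin (n + 1) ⊕ Fin n → ℕ × ℕ
  | Sum.inl i => (0, i)
  | Sum.inr i => (1, i)

/-- Restriction to the free coefficients. -/
def restr (n : ℕ) (b : ℕ × ℕ → ℂ) : solSpace n b →ₗ[ℂ] (Fin (n + 1) ⊕ Fin n → ℂ) :=
  (LinearMap.funLeft ℂ ℂ (freePos n)).comp (solSpace n b).subtype

lemma restr_inj (n : ℕ) (b : ℕ × ℕ → ℂ) : Function.Injective (restr n b) := by
  rw [← LinearMap.ker_eq_bot, LinearMap.ker_eq_bot']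
  rintro ⟨C, hC, hC'⟩ h
  have key : ∀ m k, C (m, k) = 0 := by
    intro m
    induction m using Nat.strong_induction_on with
    | _ m ih =>
      intro k
      by_cases hk : n < m + k
      · exact hC m k hk
      match m, ih, hk with
      | 0, ih, hk => exact congrFun h (Sum.inl ⟨k, by omega⟩)
      | 1, ih, hk => exact congrFun h (Sum.inr ⟨k, by omega⟩)
      | m + 2, ih, hk =>
        have h1 := hC' m k (by omega)
        rw [ih m (by omega), Finset.sum_eq_zero, mul_zero, add_zero] at h1
        · refine (mul_eq_zero.1 h1).resolve_left ?_
          exact Nat.cast_ne_zero.2 (by positivity)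
        · intro i _
          exact Finset.sum_eq_zero fun j _ => by rw [ih (m - i) (by omega), mul_zero]
  ext ⟨m, k⟩
  exact key m k

lemma restr_surj (n : ℕ) (b : ℕ × ℕ → ℂ) : Function.Surjective (restr n b) := by
  intro a
  let p : ℕ → ℂ := fun k => if h : k < n + 1 then a (Sum.inl ⟨k, h⟩) else 0
  let q : ℕ → ℂ := fun k => if h : k < n then a (Sum.inr ⟨k, h⟩) else 0
  refine ⟨⟨fun x => solRec n b p q x.1 x.2, ?_, ?_⟩, ?_⟩
  · intro m k h
    match m, h with
    | 0, h => simp only [solRec, p]; exact dif_neg (by omega)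
    | 1, h => simp only [solRec, q]; exact dif_neg (by omega)
    | m + 2, h => simp only [solRec]; exact if_neg (by omega)
  · intro m k h
    have h0 : (((m + 1) * (m + 2) : ℕ) : ℂ) ≠ 0 := Nat.cast_ne_zero.2 (by positivity)
    change _ * solRec n b p q (m + 2) k + _ * solRec n b p q m (k + 2) = _
    rw [solRec, if_pos h, mul_div_cancel₀ _ h0, sub_add_cancel]
  · ext (i | i)
    · change solRec n b p q 0 i = _
      simp only [solRec, p]
      exact dif_pos i.2
    · change solRec n b p q 1 i = _
      simp only [solRec, q]
      exact dif_pos i.2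

/-- The set `K` of families `C = (C_{k₁,k₂})_{k₁+k₂ ≤ n}` (encoded as functions `ℕ × ℕ → ℂ`
vanishing for `k₁ + k₂ > n`) satisfying, for all `k₁ + k₂ ≤ n - 2`, the linear relations
`(k₁+1)(k₁+2) C_{k₁+2,k₂} + (k₂+1)(k₂+2) C_{k₁,k₂+2} = Σ_{i≤k₁} Σ_{j≤k₂} b(i,j) C_{k₁-i,k₂-j}`
is a `ℂ`-linear subspace of dimension exactly `2n + 1`. -/
theorem dim_K_eq (n : ℕ) (hn : 2 ≤ n) (b : ℕ × ℕ → ℂ) :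
    ∃ K : Submodule ℂ ((ℕ × ℕ) → ℂ),
      (∀ C : (ℕ × ℕ) → ℂ,
        C ∈ K ↔
          ((∀ k₁ k₂ : ℕ, n < k₁ + k₂ → C (k₁, k₂) = 0) ∧
            (∀ k₁ k₂ : ℕ, k₁ + k₂ + 2 ≤ n →
              (((k₁ + 1) * (k₁ + 2) : ℕ) : ℂ) * C (k₁ + 2, k₂)
                  + (((k₂ + 1) * (k₂ + 2) : ℕ) : ℂ) * C (k₁, k₂ + 2) =
                ∑ i ∈ Finset.range (k₁ + 1), ∑ j ∈ Finset.range (k₂ + 1),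
                  b (i, j) * C (k₁ - i, k₂ - j)))) ∧
      Module.finrank ℂ K = 2 * n + 1 := by
  refine ⟨solSpace n b, fun C => Iff.rfl, ?_⟩
  rw [(LinearEquiv.ofBijective (restr n b) ⟨restr_inj n b, restr_surj n b⟩).finrank_eq]
  simp
  ring
end
end

section
/- Let q ≥ 1, θ ∈ ℝ, and N ∈ ℂ with N ≠ 0. Let b : ℕ × ℕ → ℂ satisfy b(i,j) = 0 for all (i,j) ≠ (0,0) (i.e., β is constant near G) and b(0,0) = N² (the β-normalization, N = √(β(G))). Then the unique solution λ of the GPW system under the GPW normalization satisfies λ(i,j) = 0 for all (i,j) with i ≥ 2; consequently the corresponding generalized plane wave is exactly the classical plane wave φ(x,y) = exp(N((x−x_G)cos θ + (y−y_G)sin θ)). -/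
noncomputable section

/-- The polynomial `P(x,y) = Σ_{0 ≤ i+j ≤ q+1} lam (i,j) (x-x_G)^i (y-y_G)^j`, so that the
generalized plane wave is `φ = exp P`. -/
def gpwP (q : ℕ) (G : ℝ × ℝ) (lam : ℕ × ℕ → ℂ) (z : ℝ × ℝ) : ℂ :=
  ∑ i ∈ Finset.range (q + 2), ∑ j ∈ Finset.range (q + 2 - i),
    lam (i, j) * ((z.1 - G.1 : ℝ) : ℂ) ^ i * ((z.2 - G.2 : ℝ) : ℂ) ^ j

/-- With the β-normalization for a constant coefficient (`b (i,j) = 0` for `(i,j) ≠ (0,0)` and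
`b (0,0) = N²`), the solution of the GPW system under the GPW normalization satisfies
`lam (i,j) = 0` for all `i ≥ 2`; consequently the generalized plane wave is exactly the
classical plane wave `exp(N((x-x_G)cos θ + (y-y_G)sin θ))`. -/
theorem gpw_constant_coefficient_is_plane_wave (q : ℕ) (hq : 1 ≤ q) (θ : ℝ)
    (N : ℂ) (hN : N ≠ 0) (G : ℝ × ℝ) (b : ℕ × ℕ → ℂ)
    (hb0 : b (0, 0) = N ^ 2) (hb : ∀ i j : ℕ, (i, j) ≠ ((0 : ℕ), (0 : ℕ)) → b (i, j) = 0)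
    (lam : ℕ × ℕ → ℂ) (hsys : gpwSystem q b lam) (hnorm : gpwNormalized q N θ lam) :
    (∀ i j : ℕ, 2 ≤ i → i + j ≤ q + 1 → lam (i, j) = 0) ∧
      ∀ z : ℝ × ℝ,
        Complex.exp (gpwP q G lam z) =
          Complex.exp (N * (((z.1 - G.1 : ℝ) : ℂ) * ((Real.cos θ : ℝ) : ℂ)
            + ((z.2 - G.2 : ℝ) : ℂ) * ((Real.sin θ : ℝ) : ℂ))) := by
  obtain ⟨h00, h10, h01, hz⟩ := hnorm
  have key : ∀ d : ℕ, 2 ≤ d → d ≤ q + 1 → ∀ i j : ℕ, i + j = d → lam (i, j) = 0 := by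
    intro d
    induction d using Nat.strong_induction_on with
    | _ d ihd =>
      intro hd hdq i
      induction i using Nat.strong_induction_on with
      | _ i ihi =>
        intro j hij
        by_cases hi : i ≤ 1
        · exact hz i j hi (by omega) (by omega)
        obtain ⟨m, rfl⟩ : ∃ m, i = m + 2 := ⟨i - 2, by omega⟩
        have hE := hsys m j (by omega)
        have h2 : lam (m, j + 2) = 0 := ihi m (by omega) (j + 2) (by omega)
        have hc : (((m + 2) * (m + 1) : ℕ) : ℂ) ≠ 0 := by
          exact_mod_cast (by positivity : (m + 2) * (m + 1) ≠ 0)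
        have hfin : (((m + 2) * (m + 1) : ℕ) : ℂ) * lam (m + 2, j) = 0 := by
          by_cases hmj : m = 0 ∧ j = 0
          · obtain ⟨rfl, rfl⟩ := hmj
            have hcs : ((Real.cos θ : ℝ) : ℂ) ^ 2 + ((Real.sin θ : ℝ) : ℂ) ^ 2 = 1 := by
              exact_mod_cast Real.cos_sq_add_sin_sq θ
            rw [hb0, h2] at hE
            simp only [zero_add, Finset.sum_range_one, Nat.sub_zero, Nat.mul_one, Nat.cast_one,
              one_mul, mul_zero, add_zero, h10, h01] at hE ⊢
            linear_combination (-1 : ℂ) * hE - N ^ 2 * hcs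
          · have hbz : b (m, j) = 0 := hb m j (by
              intro h
              exact hmj (by simpa using h))
            have s1 : ∑ k ∈ Finset.range (m + 1), ∑ l ∈ Finset.range (j + 1),
                (((m - k + 1) * (k + 1) : ℕ) : ℂ) * lam (m - k + 1, j - l) * lam (k + 1, l)
                  = 0 := by
              refine Finset.sum_eq_zero fun k hk => Finset.sum_eq_zero fun l hl => ?_
              rw [Finset.mem_range] at hk hl
              by_cases hkl : k + l = 0
              · rw [ihd (m - k + 1 + (j - l)) (by omega) (by omega) (by omega) _ _ rfl]
                simp
              · rw [ihd (k + 1 + l) (by omega) (by omega) (by omega) _ _ rfl]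
                simp
            have s2 : ∑ k ∈ Finset.range (j + 1), ∑ l ∈ Finset.range (m + 1),
                (((j - k + 1) * (k + 1) : ℕ) : ℂ) * lam (m - l, j - k + 1) * lam (l, k + 1)
                  = 0 := by
              refine Finset.sum_eq_zero fun k hk => Finset.sum_eq_zero fun l hl => ?_
              rw [Finset.mem_range] at hk hl
              by_cases hkl : k + l = 0
              · rw [ihd (m - l + (j - k + 1)) (by omega) (by omega) (by omega) _ _ rfl]
                simp
              · rw [ihd (l + (k + 1)) (by omega) (by omega) (by omega) _ _ rfl]
                simp
            rw [hbz, h2, s1, s2] at hE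
            linear_combination (-1 : ℂ) * hE
        exact (mul_eq_zero.mp hfin).resolve_left hc
  refine ⟨fun i j hi hij => key (i + j) (by omega) hij i j rfl, fun z => ?_⟩
  congr 1
  obtain ⟨r, rfl⟩ : ∃ r, q = r + 1 := ⟨q - 1, by omega⟩
  unfold gpwP
  generalize ((z.1 - G.1 : ℝ) : ℂ) = X
  generalize ((z.2 - G.2 : ℝ) : ℂ) = Y
  have e2 : ∑ i ∈ Finset.range (r + 1), ∑ j ∈ Finset.range (r + 1 + 2 - (i + 1 + 1)),
      lam (i + 1 + 1, j) * X ^ (i + 1 + 1) * Y ^ j = 0 := by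
    refine Finset.sum_eq_zero fun i hi => Finset.sum_eq_zero fun j hj => ?_
    rw [Finset.mem_range] at hi hj
    rw [key (i + 1 + 1 + j) (by omega) (by omega) _ _ rfl]
    simp
  have e1 : ∑ j ∈ Finset.range (r + 1), lam (1, j + 1) * X ^ 1 * Y ^ (j + 1) = 0 := by
    refine Finset.sum_eq_zero fun j hj => ?_
    rw [Finset.mem_range] at hj
    rw [key (1 + (j + 1)) (by omega) (by omega) _ _ rfl]
    simp
  have e0 : ∑ j ∈ Finset.range (r + 1), lam (0, j + 1 + 1) * X ^ 0 * Y ^ (j + 1 + 1) = 0 := by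
    refine Finset.sum_eq_zero fun j hj => ?_
    rw [Finset.mem_range] at hj
    rw [key (0 + (j + 1 + 1)) (by omega) (by omega) _ _ rfl]
    simp
  rw [show r + 1 + 2 = r + 1 + 1 + 1 from rfl] at *
  rw [Finset.sum_range_succ', Finset.sum_range_succ', e2,
    show r + 1 + 1 + 1 - (0 + 1) = r + 1 + 1 by omega,
    show r + 1 + 1 + 1 - 0 = r + 1 + 1 + 1 by omega]
  rw [Finset.sum_range_succ' _ (r + 1), Finset.sum_range_succ' _ (r + 1 + 1),
    Finset.sum_range_succ' _ (r + 1)]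
  simp only [zero_add] at *
  rw [e1, e0, h00, h10, h01]
  ring
end
end

section
/- Let n ≥ 1, q ≥ n+1, b : ℕ × ℕ → ℂ, N ∈ ℂ with N ≠ 0, G = (x_G,y_G) ∈ ℝ², and p = 2n+1. For l ∈ {1, …, p} set θ_l = 2π(l−1)/p and let φ_l be the generalized plane wave with data (G, N, θ_l, q, b). Then the functions φ_1, …, φ_p are linearly independent in the ℂ-vector space of functions ℝ² → ℂ. -/
noncomputable section

theorem gpw_sin_inj (n l m : ℕ) (hl : l < 2 * n + 1) (hm : m < 2 * n + 1)
    (h : Real.sin (2 * Real.pi * (l : ℕ) / (2 * n + 1)) =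
      Real.sin (2 * Real.pi * (m : ℕ) / (2 * n + 1))) : l = m := by
  have hp : (2 * (n : ℝ) + 1) ≠ 0 := by positivity
  have hpi := Real.pi_ne_zero
  rw [Real.sin_eq_sin_iff] at h
  obtain ⟨k, h | h⟩ := h
  · have h1 : (m : ℝ) = k * (2 * n + 1) + l := by
      field_simp at h
      linarith
    have h2 : (m : ℤ) = k * (2 * n + 1) + l := by exact_mod_cast h1
    have hk : k = 0 := by
      by_contra hk
      rcases lt_or_gt_of_ne hk with hk | hk
      · nlinarith
      · nlinarith
    subst hk
    omega
  · have h1 : 2 * (m : ℝ) = (2 * k + 1) * (2 * n + 1) - 2 * l := by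
      field_simp at h
      linarith
    have h2 : 2 * (m : ℤ) = (2 * k + 1) * (2 * n + 1) - 2 * l := by exact_mod_cast h1
    ring_nf at h2
    omega

/-- The character `t ↦ exp (a t)` of the additive group of reals. -/
def gpwChar (a : ℂ) : Multiplicative ℝ →* ℂ where
  toFun t := Complex.exp (a * ((Multiplicative.toAdd t : ℝ) : ℂ))
  map_one' := by simp
  map_mul' s t := by
    rw [← Complex.exp_add, toAdd_mul]
    push_cast
    ring_nf

theorem gpwChar_injective : Function.Injective gpwChar := by
  intro a c h
  have key : ∀ a : ℂ, HasDerivAt (fun t : ℝ => Complex.exp (a * (t : ℂ))) a 0 := by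
    intro a
    have h1 : HasDerivAt (fun t : ℝ => a * (t : ℂ)) (a * 1) 0 :=
      (Complex.ofRealCLM.hasDerivAt (x := (0 : ℝ))).const_mul a
    simpa using h1.cexp
  have hf : (fun t : ℝ => Complex.exp (a * (t : ℂ))) = fun t : ℝ => Complex.exp (c * (t : ℂ)) := by
    funext t
    exact DFunLike.congr_fun h (Multiplicative.ofAdd t)
  have h1 := key a
  rw [hf] at h1
  exact h1.unique (key c)

theorem gpwP_line (q : ℕ) (G : ℝ × ℝ) (N : ℂ) (θ : ℝ) (lam : ℕ × ℕ → ℂ)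
    (h : gpwNormalized q N θ lam) (t : ℝ) :
    gpwP q G lam (G.1, G.2 + t) = N * Real.sin θ * (t : ℂ) := by
  obtain ⟨h0, -, h1, h2⟩ := h
  unfold gpwP
  rw [Finset.sum_eq_single 0]
  · rw [Finset.sum_eq_single 1]
    · simp [h1]
    · intro j hj hj1
      rw [Finset.mem_range] at hj
      rcases Nat.eq_zero_or_pos j with rfl | hj0
      · simp [h0]
      · rw [h2 0 j (by omega) (by omega) (by omega)]
        simp
    · intro hh
      simp at hh
  · intro i _ hi
    simp [hi]
  · intro hh
    simp at hh

/-- The `p = 2n+1` generalized plane waves `φ_l = exp P_l` with data `(G, N, θ_l, q, b)`,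
`θ_l = 2π(l-1)/p`, `N ≠ 0`, `q ≥ n+1`, are linearly independent in the `ℂ`-vector space of
functions `ℝ² → ℂ`. -/
theorem gpw_linearIndependent (n q : ℕ) (hn : 1 ≤ n) (hq : n + 1 ≤ q) (b : ℕ × ℕ → ℂ)
    (N : ℂ) (hN : N ≠ 0) (G : ℝ × ℝ)
    (lam : Fin (2 * n + 1) → ℕ × ℕ → ℂ)
    (hlam : ∀ l : Fin (2 * n + 1), gpwSystem q b (lam l) ∧
      gpwNormalized q N (2 * Real.pi * (l : ℕ) / (2 * n + 1)) (lam l)) :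
    LinearIndependent ℂ
      (fun (l : Fin (2 * n + 1)) => fun z : ℝ × ℝ => Complex.exp (gpwP q G (lam l) z)) := by
  classical
  let f : Multiplicative ℝ → ℝ × ℝ := fun t => (G.1, G.2 + Multiplicative.toAdd t)
  apply LinearIndependent.of_comp (LinearMap.funLeft ℂ ℂ f)
  have hinj : Function.Injective (fun l : Fin (2 * n + 1) =>
      gpwChar (N * Real.sin (2 * Real.pi * (l : ℕ) / (2 * n + 1)))) := by
    intro l m h
    have h1 := mul_left_cancel₀ hN (gpwChar_injective h)
    exact Fin.ext (gpw_sin_inj n l m l.2 m.2 (Complex.ofReal_injective h1))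
  have hli := (linearIndependent_monoidHom (Multiplicative ℝ) ℂ).comp _ hinj
  have heq : (LinearMap.funLeft ℂ ℂ f) ∘ (fun (l : Fin (2 * n + 1)) => fun z : ℝ × ℝ =>
      Complex.exp (gpwP q G (lam l) z)) = ((fun f : Multiplicative ℝ →* ℂ => (f : _ → ℂ)) ∘
        fun l : Fin (2 * n + 1) =>
          gpwChar (N * Real.sin (2 * Real.pi * (l : ℕ) / (2 * n + 1)))) := by
    funext l t
    show Complex.exp (gpwP q G (lam l) (G.1, G.2 + Multiplicative.toAdd t)) = _
    rw [gpwP_line q G N _ (lam l) (hlam l).2]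
    rfl
  rw [heq]
  exact hli
end
end
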